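/- Let L be an order polynomially complete lattice, n ≥ 1, and let κ be a cardinal of uncountable cofinality. If κ < νₙ(L), then κ < μ_∞(L). In particular, ν_∞(L) ≤ μ_∞(L)⁺, and if μ_∞(L) has uncountable cofinality then ν_∞(L) ≤ μ_∞(L). -/

import Mathlib

universe u v w

open Cardinal

/-- A well-ordered chain: a chain whose induced strict order is well-founded. -/
def IsWellChain {L : Type u} [PartialOrder L] (A : Set L) : Prop :=
  IsChain (· ≤ ·) A ∧ A.WellFoundedOn (· < ·)

/-- A co-well-ordered chain: a chain well-ordered under the reverse order. -/
def IsCoWellChain {L : Type u} [PartialOrder L] (A : Set L) : Prop :=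
  IsChain (· ≤ ·) A ∧ A.WellFoundedOn (· > ·)

/-- A subset of a partial order is uniform if it is an antichain, a well-ordered chain,
or a co-well-ordered chain. -/
def IsUniform {L : Type u} [PartialOrder L] (A : Set L) : Prop :=
  IsAntichain (· ≤ ·) A ∨ IsWellChain A ∨ IsCoWellChain A

/-- `mu L` is the least cardinal `m` such that `L` has no uniform subset of cardinality `m`. -/
noncomputable def mu (L : Type u) [PartialOrder L] : Cardinal.{u} :=
  sInf {m : Cardinal.{u} | ¬ ∃ A : Set L, IsUniform A ∧ #A = m}

/-- `nu2 L₁ L₂` is the least cardinal `n` such that there is no family of `n` pairwise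
incomparable monotone functions from `L₁` to `L₂` (functions ordered pointwise). -/
noncomputable def nu2 (L₁ : Type u) (L₂ : Type v) [PartialOrder L₁] [PartialOrder L₂] :
    Cardinal.{max u v} :=
  sInf {n : Cardinal.{max u v} |
    ¬ ∃ S : Set (L₁ → L₂), (∀ f ∈ S, Monotone f) ∧ IsAntichain (· ≤ ·) S ∧ #S = n}

/-- `nu L = nu2 L L`. -/
noncomputable def nu (L : Type u) [PartialOrder L] : Cardinal.{u} := nu2 L L

/-- `muInf L = sup_{n} mu (Lⁿ)` for `n ≥ 1`. -/
noncomputable def muInf (L : Type u) [PartialOrder L] : Cardinal.{u} :=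
  ⨆ n : ℕ, mu (Fin (n + 1) → L)

/-- `nuInf L = sup_{n} nu (Lⁿ, L)` for `n ≥ 1`. -/
noncomputable def nuInf (L : Type u) [PartialOrder L] : Cardinal.{u} :=
  ⨆ n : ℕ, nu2 (Fin (n + 1) → L) L

/-- A function `(Fin n → L) → L` is a polynomial function if it lies in the smallest
sublattice of the function lattice containing all coordinate projections and all
constant functions. -/
def IsPolynomialFn (L : Type u) [Lattice L] (n : ℕ) (f : (Fin n → L) → L) : Prop :=
  f ∈ latticeClosure ({g : (Fin n → L) → L | ∃ i : Fin n, g = fun x => x i} ∪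
    {g : (Fin n → L) → L | ∃ c : L, g = fun _ => c})

/-- A lattice is order polynomially complete if for every `n ≥ 1` every monotone
`n`-ary function is a polynomial function. -/
def OPC (L : Type u) [Lattice L] : Prop :=
  ∀ n : ℕ, 1 ≤ n → ∀ f : (Fin n → L) → L, Monotone f → IsPolynomialFn L n f

/-- The three possible comparison types between distinct blocks of a canonical family. -/
inductive CompType : Type
  | lt
  | gt
  | incomp

/-- The relation on `L` associated to a comparison type. -/
def CompType.rel {L : Type u} [PartialOrder L] : CompType → L → L → Prop
  | .lt, a, b => a < b
  | .gt, a, b => b < a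
  | .incomp, a, b => ¬ a ≤ b ∧ ¬ b ≤ a

/-- A family of subsets of `L` is canonical if each member is uniform, all members are
of the same type, and comparison between elements of distinct members depends only on
the pair of indices. -/
def IsCanonical {L : Type u} [PartialOrder L] {ι : Type v} (A : ι → Set L) : Prop :=
  ((∀ i, IsAntichain (· ≤ ·) (A i)) ∨ (∀ i, IsWellChain (A i)) ∨ (∀ i, IsCoWellChain (A i))) ∧
  ∃ F : ι → ι → CompType, ∀ i j, i ≠ j → ∀ a ∈ A i, ∀ b ∈ A j, (F i j).rel a b

/-- Shapes of lattice polynomials in `n` variables. -/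
inductive PShape (n : ℕ) : Type
  | proj (i : Fin n) : PShape n
  | const : PShape n
  | sup (s t : PShape n) : PShape n
  | inf (s t : PShape n) : PShape n

/-- An injective coding of shapes. -/
def PShape.code {n : ℕ} : PShape n → ℕ
  | .proj i => Nat.pair 0 i
  | .const => Nat.pair 1 0
  | .sup s t => Nat.pair 2 (Nat.pair s.code t.code)
  | .inf s t => Nat.pair 3 (Nat.pair s.code t.code)

lemma PShape.code_inj {n : ℕ} : Function.Injective (PShape.code (n := n)) := by
  intro s
  induction s with
  | proj i => intro t h; cases t <;> simp [PShape.code, Nat.pair_eq_pair, Fin.ext_iff] at h ⊢; exact h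
  | const => intro t h; cases t <;> simp [PShape.code, Nat.pair_eq_pair] at h ⊢
  | sup a b iha ihb =>
    intro t h
    cases t <;> simp [PShape.code, Nat.pair_eq_pair] at h ⊢
    exact ⟨iha h.1, ihb h.2⟩
  | inf a b iha ihb =>
    intro t h
    cases t <;> simp [PShape.code, Nat.pair_eq_pair] at h ⊢
    exact ⟨iha h.1, ihb h.2⟩

/-- The number of constants. -/
def PShape.size {n : ℕ} : PShape n → ℕ
  | .proj _ => 0
  | .const => 1
  | .sup s t => s.size + t.size
  | .inf s t => s.size + t.size

/-- Evaluation of a shape at constants and variables. -/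
def PShape.eval {L : Type u} [Lattice L] {n : ℕ} :
    (s : PShape n) → (Fin s.size → L) → (Fin n → L) → L
  | .proj i, _, x => x i
  | .const, c, _ => c (0 : Fin 1)
  | .sup s t, c, x =>
      s.eval (fun i => c (Fin.castAdd t.size i)) x ⊔ t.eval (fun i => c (Fin.natAdd s.size i)) x
  | .inf s t, c, x =>
      s.eval (fun i => c (Fin.castAdd t.size i)) x ⊓ t.eval (fun i => c (Fin.natAdd s.size i)) x

lemma PShape.eval_mono {L : Type u} [Lattice L] {n : ℕ} (s : PShape n) :
    Monotone (s.eval (L := L)) := by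
  induction s with
  | proj i => intro c d h x; exact le_rfl
  | const => intro c d h x; exact h _
  | sup a b iha ihb =>
    intro c d h x
    exact sup_le_sup (iha (fun i => h _) x) (ihb (fun i => h _) x)
  | inf a b iha ihb =>
    intro c d h x
    exact inf_le_inf (iha (fun i => h _) x) (ihb (fun i => h _) x)

lemma exists_shape {L : Type u} [Lattice L] {n : ℕ} (f : (Fin n → L) → L)
    (hf : IsPolynomialFn L n f) : ∃ (s : PShape n) (c : Fin s.size → L), s.eval c = f := by
  let K : Sublattice ((Fin n → L) → L) :=
    { carrier := {f | ∃ (s : PShape n) (c : Fin s.size → L), s.eval c = f}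
      supClosed' := by
        rintro _ ⟨s, c, rfl⟩ _ ⟨t, d, rfl⟩
        refine ⟨.sup s t, Fin.append c d, ?_⟩
        funext x
        simp [PShape.eval]
      infClosed' := by
        rintro _ ⟨s, c, rfl⟩ _ ⟨t, d, rfl⟩
        refine ⟨.inf s t, Fin.append c d, ?_⟩
        funext x
        simp [PShape.eval] }
  have hK : IsSublattice (K : Set ((Fin n → L) → L)) := K.isSublattice
  refine (latticeClosure_min ?_ hK) hf
  rintro g (⟨i, rfl⟩ | ⟨c, rfl⟩)
  · exact ⟨.proj i, Fin.elim0, rfl⟩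
  · exact ⟨.const, fun _ => c, rfl⟩

lemma IsUniform.subset {L : Type u} [PartialOrder L] {A B : Set L} (hA : IsUniform A)
    (h : B ⊆ A) : IsUniform B := by
  rcases hA with hA | hA | hA
  · exact Or.inl (hA.subset h)
  · exact Or.inr (Or.inl ⟨hA.1.mono h, hA.2.subset h⟩)
  · exact Or.inr (Or.inr ⟨hA.1.mono h, hA.2.subset h⟩)

lemma lt_mu {L : Type u} [PartialOrder L] {A : Set L} (hA : IsUniform A) {κ : Cardinal.{u}}
    (hk : κ ≤ #A) : κ < mu L := by
  by_contra hlt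
  have hne : {m : Cardinal.{u} | ¬ ∃ A : Set L, IsUniform A ∧ #A = m}.Nonempty := by
    refine ⟨Order.succ #L, ?_⟩
    rintro ⟨B, -, hB⟩
    exact absurd (mk_set_le B) (by rw [hB]; exact (Order.lt_succ _).not_ge)
  have hm := csInf_mem hne
  obtain ⟨B, hBA, hB⟩ := Cardinal.le_mk_iff_exists_subset.1 ((not_lt.1 hlt).trans hk)
  exact hm ⟨B, hA.subset hBA, hB⟩

lemma mu_le_muInf (L : Type u) [PartialOrder L] (n : ℕ) : mu (Fin (n + 1) → L) ≤ muInf L :=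
  le_ciSup (f := fun n : ℕ => mu (Fin (n + 1) → L)) (Cardinal.bddAbove_of_small) n

lemma part_one (L : Type u) [Lattice L] (h : OPC L) (n : ℕ) (hn : 1 ≤ n) (κ : Cardinal.{u})
    (hκ : ℵ₀ < κ.ord.cof) (hlt : κ < nu2 (Fin n → L) L) : κ < muInf L := by
  have hS := notMem_of_lt_csInf' hlt
  simp only [Set.mem_ofPred_eq, not_not] at hS
  obtain ⟨S, hmono, hanti, hcard⟩ := hS
  have hκ0 : ℵ₀ ≤ κ := hκ.le.trans (Ordinal.cof_ord_le κ)
  choose s c hsc using fun f : S => exists_shape f.1 (h n hn f.1 (hmono f.1 f.2))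
  have hle : #(ULift.{u} ℕ) < κ.ord.cof := by simpa using hκ
  obtain ⟨a, ha⟩ := Cardinal.infinite_pigeonhole_card (fun f : S => ULift.up.{u} (s f).code)
    κ hcard.ge hκ0 hle
  have hne : Nonempty ((fun f : S => ULift.up.{u} (s f).code) ⁻¹' {a}) := by
    rw [← Cardinal.mk_ne_zero_iff]
    intro h0
    rw [h0] at ha
    exact absurd (hκ0.trans ha) (not_le.2 Cardinal.aleph0_pos)
  obtain ⟨f₀, hf₀⟩ := hne
  have key : ∀ f : ((fun f : S => ULift.up.{u} (s f).code) ⁻¹' {a}),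
      ∃ d : Fin (s f₀).size → L, (s f₀).eval d = f.1.1 := by
    rintro ⟨f, hf⟩
    have : s f = s f₀ := PShape.code_inj (ULift.up_injective (hf.trans hf₀.symm))
    rw [← this]
    exact ⟨c f, hsc f⟩
  choose p hp using key
  have hp' : ∀ f g, p f ≤ p g → f = g := by
    intro f g hfg
    have h1 : f.1.1 ≤ g.1.1 := by
      rw [← hp f, ← hp g]; exact (s f₀).eval_mono hfg
    exact Subtype.ext (Subtype.ext (hanti.eq f.1.2 g.1.2 h1))
  have hinj : Function.Injective p := fun f g hfg => hp' f g hfg.le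
  have hA : IsAntichain (· ≤ ·) (Set.range p) := by
    rintro _ ⟨f, rfl⟩ _ ⟨g, rfl⟩ hne hle
    exact hne (congrArg p (hp' f g hle))
  have hcA : κ ≤ #(Set.range p) := by rw [Cardinal.mk_range_eq p hinj]; exact ha
  clear hp
  generalize (s f₀).size = m at p hp' hinj hA hcA
  cases m with
  | zero =>
    exfalso
    have h1 : #(Set.range p) ≤ 1 := Cardinal.le_one_iff_subsingleton.2 inferInstance
    exact absurd (hκ0.trans (hcA.trans h1)) (not_le.2 Cardinal.one_lt_aleph0)
  | succ m => exact (lt_mu (Or.inl hA) hcA).trans_le (mu_le_muInf L m)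

lemma aleph0_le_muInf (L : Type u) [Lattice L] [Nontrivial L] : ℵ₀ ≤ muInf L := by
  rw [Cardinal.aleph0_le]
  intro n
  obtain ⟨a, b, hab⟩ : ∃ a b : L, a < b := by
    obtain ⟨a, b, hne⟩ := exists_pair_ne L
    exact ⟨a ⊓ b, a ⊔ b, inf_lt_sup.2 hne⟩
  let F : Fin (n + 1) → (Fin (n + 1) → L) := fun k i => if i < k then b else a
  have hF : Monotone F := by
    intro k l hkl i
    simp only [F]
    split_ifs with h1 h2
    · exact le_rfl
    · exact absurd (h1.trans_le hkl) h2
    · exact hab.le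
    · exact le_rfl
  have hinj : Function.Injective F := by
    have : ∀ k l, k < l → F k ≠ F l := by
      intro k l hkl he
      have := congrFun he k
      simp [F, hkl] at this
      exact hab.ne this
    intro k l he
    rcases lt_trichotomy k l with h | h | h
    · exact absurd he (this _ _ h)
    · exact h
    · exact absurd he.symm (this _ _ h)
  have hU : IsUniform (Set.range F) := by
    refine Or.inr (Or.inl ⟨?_, (Set.finite_range F).wellFoundedOn⟩)
    rintro _ ⟨k, rfl⟩ _ ⟨l, rfl⟩ -
    exact (le_total k l).imp (fun h => hF h) (fun h => hF h)
  have hc : ((n : ℕ) : Cardinal.{u}) ≤ #(Set.range F) := by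
    have := Cardinal.mk_range_eq_of_injective hinj
    simp at this
    rw [this]
    exact self_le_add_right _ _
  exact ((lt_mu hU hc).trans_le (mu_le_muInf L n)).le

/-- For an o.p.c. lattice `L`: if `κ` has uncountable cofinality and `κ < νₙ(L)` then
`κ < μ_∞(L)`. In particular `ν_∞(L) ≤ μ_∞(L)⁺`, and `ν_∞(L) ≤ μ_∞(L)` if `μ_∞(L)` has
uncountable cofinality. -/
theorem nu_n_lt_imp_mu_inf (L : Type u) [Lattice L] (h : OPC L) :
    (∀ n : ℕ, 1 ≤ n → ∀ κ : Cardinal.{u}, ℵ₀ < κ.ord.cof →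
      κ < nu2 (Fin n → L) L → κ < muInf L) ∧
    nuInf L ≤ Order.succ (muInf L) ∧
    (ℵ₀ < (muInf L).ord.cof → nuInf L ≤ muInf L) := by
  refine ⟨part_one L h, ?_, ?_⟩
  · refine ciSup_le' fun n => ?_
    by_contra hlt
    rw [not_le] at hlt
    rcases subsingleton_or_nontrivial L with hL | hL
    · have hS := notMem_of_lt_csInf' hlt
      simp only [Set.mem_ofPred_eq, not_not] at hS
      obtain ⟨S, -, -, hcard⟩ := hS
      have h1 : #S ≤ 1 := Cardinal.le_one_iff_subsingleton.2 inferInstance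
      rw [hcard, Order.succ_le_iff_of_not_isMax (not_isMax _), Cardinal.lt_one_iff] at h1
      have h2 : (0 : Cardinal.{u}) < mu (Fin 1 → L) :=
        lt_mu (A := ∅) (Or.inl (by simp)) (by simp)
      exact absurd (h2.trans_le (mu_le_muInf L 0)) (by simp [h1])
    · have h0 := aleph0_le_muInf L
      have := part_one L h (n + 1) (by omega) (Order.succ (muInf L))
        (by rw [(Cardinal.isRegular_succ h0).cof_ord]; exact Order.lt_succ_of_le h0) hlt
      exact absurd ((Order.lt_succ _).trans this) (lt_irrefl _)
  · intro hc
    refine ciSup_le' fun n => ?_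
    by_contra hlt
    rw [not_le] at hlt
    exact lt_irrefl _ (part_one L h (n + 1) (by omega) _ hc hlt)
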